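/- Let q be a prime power with q ≡ 1 (mod 20). Then (q,5) gives a 3-design if and only if (q,10) gives a 3-design; that is, the PSL(2,q)-orbit of the subgroup of order 5 of F_q^× is the block set of a 3-design on PG(1,q) if and only if the PSL(2,q)-orbit of the subgroup of order 10 of F_q^× is the block set of a 3-design on PG(1,q). -/

import Mathlib

/-!
Setting: `F` is a finite field of order `q`. The projective line `PG(1,q)` is
modelled as `Projectivization F (Fin 2 → F)`. Since scalar matrices act trivially
on the projective line, the images of a set under all elements of `SL(2,F)` form
exactly its `PSL(2,F)`-orbit; `mapSL g` is the map of the projective line induced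
by `g : SL(2,F)`. For `k ∣ q - 1`, the unique subgroup of order `k` of `Fˣ` is the
set of `k`-th roots of unity `{x : F | x ^ k = 1}`, embedded into the projective
line via `x ↦ [x : 1]`. `(q, k)` gives a 3-design iff there is `lam > 0` such that
every 3-subset of the projective line lies in exactly `lam` blocks of the orbit.
-/

noncomputable section

open Matrix

/-- The point at infinity `[1 : 0]` of the projective line over `F`. -/
def inftyPt (F : Type) [Field F] : Projectivization F (Fin 2 → F) :=
  Projectivization.mk F ![1, 0] (by
    intro h
    simpa using congrFun h 0)

/-- The embedding of `F` into the projective line, `x ↦ [x : 1]`. -/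
def embedPt (F : Type) [Field F] (x : F) : Projectivization F (Fin 2 → F) :=
  Projectivization.mk F ![x, 1] (by
    intro h
    simpa using congrFun h 1)

/-- The action of `g : SL(2,F)` on the projective line (as linear fractional
transformation). -/
def mapSL {F : Type} [Field F] (g : Matrix.SpecialLinearGroup (Fin 2) F) :
    Projectivization F (Fin 2 → F) → Projectivization F (Fin 2 → F) :=
  Projectivization.map (Matrix.SpecialLinearGroup.toLin' g : (Fin 2 → F) →ₗ[F] (Fin 2 → F))
    (Matrix.SpecialLinearGroup.toLin' g).injective

/-- The starter block: the unique subgroup of order `k` of `Fˣ` (the `k`-th roots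
of unity, for `k ∣ q - 1`), regarded as a subset of the projective line. -/
def starterB (F : Type) [Field F] (k : ℕ) : Set (Projectivization F (Fin 2 → F)) :=
  embedPt F '' {x : F | x ^ k = 1}

/-- The `PSL(2,F)`-orbit `GB` of the starter block. -/
def designBlocks (F : Type) [Field F] (k : ℕ) :
    Set (Set (Projectivization F (Fin 2 → F))) :=
  {S | ∃ g : Matrix.SpecialLinearGroup (Fin 2) F, S = mapSL g '' starterB F k}

/-- `GB` is the block set of a `3-(q+1, k, lam)` design: `lam` is positive and every
3-subset of the projective line is contained in exactly `lam` blocks. -/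
def isThreeDesign (F : Type) [Field F] (k lam : ℕ) : Prop :=
  0 < lam ∧
    ∀ T : Finset (Projectivization F (Fin 2 → F)), T.card = 3 →
      {S ∈ designBlocks F k | (T : Set (Projectivization F (Fin 2 → F))) ⊆ S}.ncard = lam

/-- `(q, k)` gives a 3-design. -/
def gives3Design (F : Type) [Field F] (k : ℕ) : Prop :=
  ∃ lam : ℕ, isThreeDesign F k lam

abbrev PL (F : Type) [Field F] := Projectivization F (Fin 2 → F)

def dt {F : Type} [Field F] (u v : Fin 2 → F) : F := u 0 * v 1 - u 1 * v 0

def dl {F : Type} [Field F] (u v w : Fin 2 → F) : F := dt u v * dt v w * dt w u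

def chi {F : Type} [Field F] [Fintype F] [DecidableEq F] (p : PL F × PL F × PL F) : ℤ :=
  quadraticChar F (dl p.1.rep p.2.1.rep p.2.2.rep)

section geom
set_option linter.unusedSectionVars false
variable {F : Type} [Field F] [Fintype F] [DecidableEq F]

lemma chi_mk (u v w : Fin 2 → F) (hu : u ≠ 0) (hv : v ≠ 0) (hw : w ≠ 0) :
    chi (Projectivization.mk F u hu, Projectivization.mk F v hv, Projectivization.mk F w hw)
      = quadraticChar F (dl u v w) := by
  obtain ⟨a, ha⟩ := Projectivization.exists_smul_eq_mk_rep F u hu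
  obtain ⟨b, hb⟩ := Projectivization.exists_smul_eq_mk_rep F v hv
  obtain ⟨c, hc⟩ := Projectivization.exists_smul_eq_mk_rep F w hw
  unfold chi
  simp only [← ha, ← hb, ← hc]
  have : dl (a • u) (b • v) (c • w) = ((a * b * c : Fˣ) : F) ^ 2 * dl u v w := by
    simp [dl, dt, Units.smul_def]; ring
  rw [this, map_mul, quadraticChar_sq_one' (Units.ne_zero _), one_mul]

lemma chi_map (f : (Fin 2 → F) →ₗ[F] (Fin 2 → F)) (hf : Function.Injective f) (d : F)
    (h : ∀ u v, dt (f u) (f v) = d * dt u v) (p : PL F × PL F × PL F) :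
    chi (Projectivization.map f hf p.1, Projectivization.map f hf p.2.1,
      Projectivization.map f hf p.2.2) = quadraticChar F d ^ 3 * chi p := by
  obtain ⟨p, q, r⟩ := p
  induction p using Projectivization.ind with | h u hu =>
  induction q using Projectivization.ind with | h v hv =>
  induction r using Projectivization.ind with | h w hw =>
  simp only [Projectivization.map_mk, chi_mk]
  rw [← map_pow, ← map_mul]
  congr 1
  simp only [dl, h]; ring

lemma mapSL_mk (g : Matrix.SpecialLinearGroup (Fin 2) F) (u : Fin 2 → F) (hu : u ≠ 0)
    (hu' : g.1 *ᵥ u ≠ 0) :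
    mapSL g (Projectivization.mk F u hu) = Projectivization.mk F (g.1 *ᵥ u) hu' := by
  simp [mapSL, Projectivization.map_mk, Matrix.SpecialLinearGroup.toLin'_to_linearMap]

lemma mulVec_ne (g : Matrix.SpecialLinearGroup (Fin 2) F) (u : Fin 2 → F) (hu : u ≠ 0) :
    g.1 *ᵥ u ≠ 0 := by
  intro h
  apply hu
  have : Matrix.SpecialLinearGroup.toLin' g u = 0 := by
    rw [Matrix.SpecialLinearGroup.toLin'_apply]; simpa using h
  exact (Matrix.SpecialLinearGroup.toLin' g).map_eq_zero_iff.1 this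

lemma mapSL_mul (g h : Matrix.SpecialLinearGroup (Fin 2) F) (p : PL F) :
    mapSL (g * h) p = mapSL g (mapSL h p) := by
  induction p using Projectivization.ind with | h u hu =>
  rw [mapSL_mk _ _ _ (mulVec_ne _ _ hu), mapSL_mk _ _ _ (mulVec_ne _ _ hu),
    mapSL_mk _ _ _ (mulVec_ne _ _ (mulVec_ne _ _ hu))]
  simp only [Matrix.mulVec_mulVec]
  rfl

lemma mapSL_inj (g : Matrix.SpecialLinearGroup (Fin 2) F) : Function.Injective (mapSL g) :=
  Projectivization.map_injective _ _

def map3 (g : Matrix.SpecialLinearGroup (Fin 2) F) (p : PL F × PL F × PL F) :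
    PL F × PL F × PL F := (mapSL g p.1, mapSL g p.2.1, mapSL g p.2.2)

lemma chi_mapSL (g : Matrix.SpecialLinearGroup (Fin 2) F) (p : PL F × PL F × PL F) :
    chi (map3 g p) = chi p := by
  have := chi_map (Matrix.SpecialLinearGroup.toLin' g : (Fin 2 → F) →ₗ[F] (Fin 2 → F))
    (Matrix.SpecialLinearGroup.toLin' g).injective 1 (by
      intro u v
      have hd := g.2
      rw [Matrix.det_fin_two] at hd
      simp [Matrix.SpecialLinearGroup.toLin'_to_linearMap, dt, Matrix.mulVec, dotProduct, Fin.sum_univ_two]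
      linear_combination (u 0 * v 1 - u 1 * v 0) * hd) p
  simpa [map3, mapSL] using this

def inS (S : Set (PL F)) (p : PL F × PL F × PL F) : Prop := p.1 ∈ S ∧ p.2.1 ∈ S ∧ p.2.2 ∈ S

def Nn (k : ℕ) (p : PL F × PL F × PL F) : ℕ := {S ∈ designBlocks F k | inS S p}.ncard

lemma inS_map (g : Matrix.SpecialLinearGroup (Fin 2) F) (S : Set (PL F))
    (p : PL F × PL F × PL F) : inS (mapSL g '' S) (map3 g p) ↔ inS S p := by
  simp [inS, map3, (mapSL_inj g).mem_set_image]

lemma blocks_map (k : ℕ) (g : Matrix.SpecialLinearGroup (Fin 2) F) (S : Set (PL F))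
    (h : S ∈ designBlocks F k) : mapSL g '' S ∈ designBlocks F k := by
  obtain ⟨h, rfl⟩ := h
  refine ⟨g * h, ?_⟩
  rw [Set.image_image]
  simp only [mapSL_mul]

lemma map3_inv (g : Matrix.SpecialLinearGroup (Fin 2) F) (p : PL F × PL F × PL F) :
    map3 g⁻¹ (map3 g p) = p := by
  have h1 : ∀ x : PL F, mapSL 1 x = x := by
    intro p
    induction p using Projectivization.ind with | h u hu =>
    rw [mapSL_mk _ _ _ (mulVec_ne _ _ hu)]; simp
  simp [map3, ← mapSL_mul, h1]

lemma Nn_le (k : ℕ) (g : Matrix.SpecialLinearGroup (Fin 2) F) (p : PL F × PL F × PL F) :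
    Nn k p ≤ Nn k (map3 g p) := by
  unfold Nn
  rw [← Set.ncard_image_of_injective _ (Set.image_injective.2 (mapSL_inj g))]
  apply Set.ncard_le_ncard _ (Set.toFinite _)
  rintro _ ⟨S, ⟨h1, h2⟩, rfl⟩
  exact ⟨blocks_map k g S h1, (inS_map g S p).2 h2⟩

lemma Nn_map (k : ℕ) (g : Matrix.SpecialLinearGroup (Fin 2) F) (p : PL F × PL F × PL F) :
    Nn k (map3 g p) = Nn k p := by
  apply le_antisymm _ (Nn_le k g p)
  have := Nn_le k g⁻¹ (map3 g p)
  rwa [map3_inv] at this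

lemma ne10 (t : F) : (![1, t] : Fin 2 → F) ≠ 0 := fun h => by simpa using congrFun h 0
lemma ne01 : (![0, 1] : Fin 2 → F) ≠ 0 := fun h => by simpa using congrFun h 1

def std (t : F) : PL F × PL F × PL F :=
  (Projectivization.mk F ![1, 0] (ne10 0), Projectivization.mk F ![0, 1] ne01,
    Projectivization.mk F ![1, t] (ne10 t))

lemma chi_std (t : F) : chi (std t) = quadraticChar F t := by
  rw [std, chi_mk]; congr 1; simp [dl, dt]

lemma exists_std (u v w : Fin 2 → F) (hu : u ≠ 0) (hv : v ≠ 0) (hw : w ≠ 0) (t s : F)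
    (hs : s ≠ 0) (h : t * dl u v w = s ^ 2) :
    ∃ g : Matrix.SpecialLinearGroup (Fin 2) F, map3 g (std t) =
      (Projectivization.mk F u hu, Projectivization.mk F v hv, Projectivization.mk F w hw) := by
  have h0 : t * dl u v w ≠ 0 := by rw [h]; exact pow_ne_zero _ hs
  simp only [dl, ne_eq, mul_eq_zero, not_or] at h0
  obtain ⟨ht, ⟨h1, h2⟩, h3⟩ := h0
  set a := t * dt v w / s with ha
  set b := dt w u / s with hb
  have ha0 : a ≠ 0 := div_ne_zero (mul_ne_zero ht h2) hs
  have hb0 : b ≠ 0 := div_ne_zero h3 hs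
  let A : Matrix (Fin 2) (Fin 2) F := !![a * u 0, b * v 0; a * u 1, b * v 1]
  have hA : A.det = 1 := by
    have : A.det = t * dl u v w / s ^ 2 := by
      simp only [A, Matrix.det_fin_two_of, ha, hb, dl]
      rw [show dt u v = u 0 * v 1 - u 1 * v 0 from rfl]
      field_simp
    rw [this, h]; exact div_self (pow_ne_zero _ hs)
  obtain ⟨g, hg⟩ : ∃ g : Matrix.SpecialLinearGroup (Fin 2) F, g.1 = A := ⟨⟨A, hA⟩, rfl⟩
  refine ⟨g, ?_⟩
  simp only [map3, std]
  rw [mapSL_mk _ _ _ (mulVec_ne _ _ (ne10 0)), mapSL_mk _ _ _ (mulVec_ne _ _ ne01),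
    mapSL_mk _ _ _ (mulVec_ne _ _ (ne10 t))]
  refine Prod.ext ?_ (Prod.ext ?_ ?_) <;> dsimp only <;>
    rw [Projectivization.mk_eq_mk_iff']
  · refine ⟨a, ?_⟩
    ext i; fin_cases i <;> simp [hg, A]
  · refine ⟨b, ?_⟩
    ext i; fin_cases i <;> simp [hg, A]
  · refine ⟨t * dt v u / s, ?_⟩
    ext i; fin_cases i <;> simp [hg, A, ha, hb, dt] <;> field_simp <;> ring

lemma chi_ne_imp (p : PL F × PL F × PL F) (t : F) (ht : t ≠ 0) (h : chi p = quadraticChar F t) :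
    ∃ g, map3 g (std t) = p := by
  obtain ⟨p, q, r⟩ := p
  induction p using Projectivization.ind with | h u hu =>
  induction q using Projectivization.ind with | h v hv =>
  induction r using Projectivization.ind with | h w hw =>
  rw [chi_mk] at h
  have h0 : dl u v w ≠ 0 := by
    intro h0; rw [h0, quadraticChar_zero] at h
    exact ht (quadraticChar_eq_zero_iff.1 h.symm)
  have : quadraticChar F (t * dl u v w) = 1 := by
    rw [map_mul, h, ← sq, quadraticChar_sq_one ht]
  rw [quadraticChar_one_iff_isSquare (mul_ne_zero ht h0)] at this
  obtain ⟨s, hs⟩ := this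
  exact exists_std u v w hu hv hw t s (by rintro rfl; simp [ht, h0] at hs) (by rw [hs, sq])

lemma Nn_std (k : ℕ) (p : PL F × PL F × PL F) (t : F) (ht : t ≠ 0)
    (h : chi p = quadraticChar F t) : Nn k p = Nn k (std t) := by
  obtain ⟨g, rfl⟩ := chi_ne_imp p t ht h
  exact Nn_map k g _

lemma dt_eq_zero (u v : Fin 2 → F) (hu : u ≠ 0) (hv : v ≠ 0) :
    dt u v = 0 ↔ Projectivization.mk F u hu = Projectivization.mk F v hv := by
  rw [Projectivization.mk_eq_mk_iff']
  constructor
  · intro h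
    unfold dt at h
    by_cases h0 : v 0 = 0
    · have h1 : v 1 ≠ 0 := by
        intro h1; apply hv; ext i; fin_cases i <;> simp [h0, h1]
      refine ⟨u 1 / v 1, ?_⟩
      ext i; fin_cases i
      · simp [h0] at h ⊢
        simp [h1] at h; exact h.symm
      · simp [h1]
    · refine ⟨u 0 / v 0, ?_⟩
      ext i; fin_cases i
      · simp [h0]
      · simp; field_simp; linear_combination h
  · rintro ⟨a, rfl⟩
    simp [dt]; ring

lemma chi_ne_zero (p : PL F × PL F × PL F) :
    chi p ≠ 0 ↔ p.1 ≠ p.2.1 ∧ p.2.1 ≠ p.2.2 ∧ p.2.2 ≠ p.1 := by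
  obtain ⟨p, q, r⟩ := p
  induction p using Projectivization.ind with | h u hu =>
  induction q using Projectivization.ind with | h v hv =>
  induction r using Projectivization.ind with | h w hw =>
  rw [chi_mk, ne_eq, quadraticChar_eq_zero_iff]
  simp [dl, ← dt_eq_zero, not_or, and_assoc]

lemma sum_chi (hF : ringChar F ≠ 2) [Fintype (PL F)] :
    ∑ p : PL F × PL F × PL F, chi p = 0 := by
  obtain ⟨n, hn⟩ := quadraticChar_exists_neg_one hF
  have hn0 : n ≠ 0 := by rintro rfl; simp at hn
  let f : (Fin 2 → F) →ₗ[F] (Fin 2 → F) := Matrix.toLin' !![n, 0; 0, 1]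
  have hf : Function.Injective f := by
    intro u v h
    have h0 := congrFun h 0
    have h1 := congrFun h 1
    simp [f, hn0] at h0 h1
    ext i; fin_cases i <;> assumption
  let m := Projectivization.map f hf
  have hm : Function.Injective m := Projectivization.map_injective f hf
  let M : PL F × PL F × PL F → PL F × PL F × PL F := Prod.map m (Prod.map m m)
  have hM : Function.Bijective M :=
    Finite.injective_iff_bijective.1 (hm.prodMap (hm.prodMap hm))
  have h1 : ∑ p, chi (M p) = ∑ p, chi p := hM.sum_comp (fun p => chi p)
  have h2 : ∀ p, chi (M p) = - chi p := by
    intro p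
    have := chi_map f hf n (by intro u v; simp [f, dt, Matrix.mulVec, dotProduct, Fin.sum_univ_two]; ring) p
    rw [hn] at this
    rw [show M p = (m p.1, m p.2.1, m p.2.2) from rfl]
    simpa [m] using this
  simp only [h2, Finset.sum_neg_distrib] at h1
  linarith

open Classical in
lemma sum_chi_N (k : ℕ) [Fintype (PL F)] :
    ∑ p : PL F × PL F × PL F, chi p * (Nn k p : ℤ) =
      ((designBlocks F k).ncard : ℤ) * ∑ p with inS (starterB F k) p, chi p := by
  have hfin : (designBlocks F k).Finite := Set.toFinite _
  have h1 : ∀ p : PL F × PL F × PL F,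
      (Nn k p : ℤ) = ∑ S ∈ hfin.toFinset, if inS S p then 1 else 0 := by
    intro p
    rw [Finset.sum_boole, Nn]
    congr 1
    rw [← Set.ncard_coe_finset]
    congr 1
    ext S; simp
  simp only [h1, Finset.mul_sum]
  rw [Finset.sum_comm, Set.ncard_eq_toFinset_card _ hfin, ← Finset.mul_sum, ← smul_eq_mul,
    Nat.cast_smul_eq_nsmul]
  apply Finset.sum_eq_card_nsmul
  intro S hS
  simp only [Set.Finite.mem_toFinset] at hS
  obtain ⟨g, rfl⟩ := hS
  have hM : Function.Bijective (map3 g) :=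
    Finite.injective_iff_bijective.1 (Function.LeftInverse.injective (map3_inv g))
  rw [← hM.sum_comp]
  simp only [inS_map, chi_mapSL]
  rw [Finset.sum_filter]
  apply Finset.sum_congr rfl
  intro p _
  split_ifs <;> simp

lemma embed_inj : Function.Injective (embedPt F) := by
  intro x y h
  rw [embedPt, embedPt, ← dt_eq_zero] at h
  simp [dt] at h
  linear_combination h

open Classical in
lemma sum_starter (k : ℕ) [NeZero k] (w : F) (hw : IsPrimitiveRoot w k) [Fintype (PL F)] :
    ∑ p : PL F × PL F × PL F with inS (starterB F k) p, chi p =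
      ∑ i : Fin k, ∑ j : Fin k, ∑ l : Fin k,
        quadraticChar F ((w ^ i.val - w ^ j.val) * (w ^ j.val - w ^ l.val) *
          (w ^ l.val - w ^ i.val)) := by
  let e : Fin k → PL F := fun i => embedPt F (w ^ i.val)
  have he : Function.Injective e := by
    intro i j h
    exact Fin.ext (hw.pow_inj i.2 j.2 (embed_inj h))
  have hr : ∀ x, x ∈ starterB F k ↔ ∃ i, e i = x := by
    intro x
    constructor
    · rintro ⟨y, hy, rfl⟩
      obtain ⟨i, hi, rfl⟩ := hw.eq_pow_of_pow_eq_one hy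
      exact ⟨⟨i, hi⟩, rfl⟩
    · rintro ⟨i, rfl⟩
      exact ⟨_, by rw [Set.mem_setOf_eq, ← pow_mul, mul_comm, pow_mul, hw.pow_eq_one, one_pow], rfl⟩
  let E : Fin k × Fin k × Fin k → PL F × PL F × PL F := Prod.map e (Prod.map e e)
  have hE : Function.Injective E := he.prodMap (he.prodMap he)
  have : (Finset.univ.filter fun p : PL F × PL F × PL F => inS (starterB F k) p)
      = Finset.univ.image E := by
    ext ⟨p, q, r⟩
    simp [inS, hr, E]
  rw [this, Finset.sum_image (fun _ _ _ _ h => hE h)]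
  simp only [Fintype.sum_prod_type]
  refine Finset.sum_congr rfl fun i _ => Finset.sum_congr rfl fun j _ =>
    Finset.sum_congr rfl fun l _ => ?_
  simp only [E, e, Prod.map, embedPt, chi_mk]
  congr 1
  simp [dl, dt]

lemma gives_iff (k : ℕ) : gives3Design F k ↔
    ∃ lam, 0 < lam ∧ ∀ p : PL F × PL F × PL F, chi p ≠ 0 → Nn k p = lam := by
  classical
  unfold gives3Design isThreeDesign
  refine exists_congr fun lam => and_congr_right fun _ => ?_
  constructor
  · intro h p hp
    rw [chi_ne_zero] at hp
    rw [← h {p.1, p.2.1, p.2.2} (Finset.card_eq_three.2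
      ⟨_, _, _, hp.1, hp.2.2.symm, hp.2.1, rfl⟩)]
    unfold Nn
    congr 1
    ext S
    simp [inS, Set.insert_subset_iff]
  · intro h T hT
    obtain ⟨x, y, z, h1, h2, h3, rfl⟩ := Finset.card_eq_three.1 hT
    rw [← h (x, y, z) ((chi_ne_zero _).2 ⟨h1, h3, h2.symm⟩)]
    unfold Nn
    congr 1
    ext S
    simp [inS, Set.insert_subset_iff]

theorem design_iff (k : ℕ) (hk : 3 ≤ k) [NeZero k] (w : F) (hw : IsPrimitiveRoot w k)
    (hF : ringChar F ≠ 2) : gives3Design F k ↔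
      ∑ i : Fin k, ∑ j : Fin k, ∑ l : Fin k,
        quadraticChar F ((w ^ i.val - w ^ j.val) * (w ^ j.val - w ^ l.val) *
          (w ^ l.val - w ^ i.val)) = 0 := by
  classical
  have : Fintype (PL F) := Fintype.ofFinite _
  rw [← sum_starter k w hw, gives_iff]
  have hs := sum_chi_N (F := F) k
  have hb : ((designBlocks F k).ncard : ℤ) ≠ 0 := by
    have : (designBlocks F k).Nonempty := ⟨_, 1, rfl⟩
    have := (Set.ncard_pos (Set.toFinite _)).2 this
    omega
  have h0 := sum_chi (F := F) hF
  obtain ⟨n, hn⟩ := quadraticChar_exists_neg_one hF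
  have hn0 : n ≠ 0 := by rintro rfl; simp at hn
  constructor
  · rintro ⟨lam, _, h⟩
    have : ∑ p : PL F × PL F × PL F, chi p * (Nn k p : ℤ) = 0 := by
      rw [← zero_mul (lam : ℤ), ← h0, Finset.sum_mul]
      refine Finset.sum_congr rfl fun p _ => ?_
      by_cases hp : chi p = 0
      · simp [hp]
      · rw [h p hp]
    rw [this] at hs
    exact (mul_eq_zero.1 hs.symm).resolve_left hb
  · intro h
    rw [h, mul_zero] at hs
    have h1 : ∀ p : PL F × PL F × PL F, chi p = 1 → Nn k p = Nn k (std (1 : F)) := fun p hp =>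
      Nn_std k p 1 one_ne_zero (by rw [hp, map_one])
    have h2 : ∀ p : PL F × PL F × PL F, chi p = -1 → Nn k p = Nn k (std n) := fun p hp =>
      Nn_std k p n hn0 (by rw [hp, hn])
    have h3 : ∀ p : PL F × PL F × PL F, chi p = 0 ∨ chi p = 1 ∨ chi p = -1 := fun p =>
      quadraticChar_isQuadratic F _
    have h4 : ∑ p : PL F × PL F × PL F, 2 * (chi p * (Nn k p : ℤ)) =
        ∑ p : PL F × PL F × PL F, (((Nn k (std (1 : F)) : ℤ) + Nn k (std n)) * chi p +
          ((Nn k (std (1 : F)) : ℤ) - Nn k (std n)) * chi p ^ 2) := by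
      refine Finset.sum_congr rfl fun p _ => ?_
      rcases h3 p with hp | hp | hp
      · simp [hp]
      · rw [h1 p hp, hp]; ring
      · rw [h2 p hp, hp]; ring
    rw [← Finset.mul_sum, hs, Finset.sum_add_distrib, ← Finset.mul_sum, ← Finset.mul_sum, h0] at h4
    have h5 : 0 < ∑ p : PL F × PL F × PL F, chi p ^ 2 := by
      apply Finset.sum_pos' (fun _ _ => sq_nonneg _)
      exact ⟨std 1, Finset.mem_univ _, by simp [chi_std]⟩
    have h6 : Nn k (std (1 : F)) = Nn k (std n) := by
      have : ((Nn k (std (1 : F)) : ℤ) - Nn k (std n)) * ∑ p : PL F × PL F × PL F, chi p ^ 2 = 0 := by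
        linarith
      rcases mul_eq_zero.1 this with h | h
      · omega
      · omega
    have h7 : ∀ p : PL F × PL F × PL F, chi p ≠ 0 → Nn k p = Nn k (std (1 : F)) := by
      intro p hp
      rcases h3 p with h | h | h
      · exact absurd h hp
      · exact h1 p h
      · rw [h6]; exact h2 p h
    refine ⟨_, ?_, h7⟩
    let e : ℕ → PL F := fun i => embedPt F (w ^ i)
    have he : ∀ i j, i < k → j < k → e i = e j → i = j := fun i j hi hj h =>
      hw.pow_inj hi hj (embed_inj h)
    have hm : ∀ i, e i ∈ starterB F k := fun i =>
      ⟨_, by rw [Set.mem_setOf_eq, ← pow_mul, mul_comm, pow_mul, hw.pow_eq_one, one_pow], rfl⟩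
    rw [← h7 (e 0, e 1, e 2) ((chi_ne_zero _).2 ⟨fun h => ?_, fun h => ?_, fun h => ?_⟩)]
    · apply (Set.ncard_pos (Set.toFinite _)).2
      refine ⟨mapSL 1 '' starterB F k, ⟨1, rfl⟩, ?_⟩
      have := (inS_map 1 (starterB F k) (e 0, e 1, e 2)).2 ⟨hm _, hm _, hm _⟩
      have h8 : map3 1 (e 0, e 1, e 2) = (e 0, e 1, e 2) := by
        have := map3_inv 1 (map3 1 (e 0, e 1, e 2))
        rw [inv_one] at this
        have h9 := map3_inv (1 : Matrix.SpecialLinearGroup (Fin 2) F) (e 0, e 1, e 2)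
        rw [inv_one] at h9
        simpa [map3, ← mapSL_mul] using h9
      rwa [h8] at this
    · have := he _ _ (by omega) (by omega) h; omega
    · have := he _ _ (by omega) (by omega) h; omega
    · have := he _ _ (by omega) (by omega) h; omega

end geom

def tb10 (a b c : ℤ) : Fin 10 → ℤ := ![0, a * b, a, a * b, b, c, b, a * b, a, a * b]
def tb5 (a b : ℤ) : Fin 5 → ℤ := ![0, a, b, b, a]

def cs {k : ℕ} (f : Fin k → ℤ) : ℤ :=
  ∑ i : Fin k, ∑ j : Fin k, ∑ l : Fin k, f (j - i) * f (l - j) * f (i - l)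

lemma cs_iff (a b c : ℤ) (ha : a = 1 ∨ a = -1) (hb : b = 1 ∨ b = -1) (hc : c = 1 ∨ c = -1) :
    cs (tb5 a b) = 0 ↔ cs (tb10 a b c) = 0 := by
  rcases ha with rfl | rfl <;> rcases hb with rfl | rfl <;> rcases hc with rfl | rfl <;>
    decide +kernel

lemma sum_cs {F : Type} [Field F] [Fintype F] [DecidableEq F] (k : ℕ) [NeZero k] (w : F)
    (hw : w ^ k = 1) (h1 : quadraticChar F w = 1) (f : Fin k → ℤ)
    (hf : ∀ i : Fin k, quadraticChar F (1 - w ^ i.val) = f i) :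
    ∑ i : Fin k, ∑ j : Fin k, ∑ l : Fin k,
        quadraticChar F ((w ^ i.val - w ^ j.val) * (w ^ j.val - w ^ l.val) *
          (w ^ l.val - w ^ i.val)) = cs f := by
  have key : ∀ i j : Fin k, quadraticChar F (w ^ i.val - w ^ j.val) = f (j - i) := by
    intro i j
    have : w ^ j.val = w ^ i.val * w ^ (j - i).val := by
      rw [← pow_add, pow_eq_pow_mod _ hw, pow_eq_pow_mod (i.val + _) hw, ← Fin.val_add,
        add_sub_cancel, Nat.mod_eq_of_lt j.2]
    rw [this, ← hf, ← mul_one_sub, map_mul, map_pow, h1, one_pow, one_mul]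
  simp only [map_mul, key, cs]

theorem stmt_11 (F : Type) [Field F] [Fintype F] [DecidableEq F]
    (q : ℕ) (hq : Fintype.card F = q) (hq20 : q % 20 = 1) :
    gives3Design F 5 ↔ gives3Design F 10 := by
  have hF : ringChar F ≠ 2 := by
    intro h
    have := FiniteField.even_card_iff_char_two.1 h
    omega
  obtain ⟨w, hw⟩ : ∃ w : F, IsPrimitiveRoot w 10 := by
    obtain ⟨g, hg⟩ := IsCyclic.exists_ofOrder_eq_natCard (α := Fˣ)
    rw [Nat.card_eq_fintype_card, Fintype.card_units, hq] at hg
    have h1 := IsPrimitiveRoot.orderOf g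
    have h2 := h1.pow (n := orderOf g) (a := (q - 1) / 10) (b := 10) (orderOf_pos g)
      (by rw [hg]; omega)
    exact ⟨_, IsPrimitiveRoot.coe_units_iff.2 h2⟩
  have hz : IsPrimitiveRoot (w ^ 2) 5 := hw.pow (by norm_num) (by norm_num)
  have hw10 := hw.pow_eq_one
  have hw0 : w ≠ 0 := hw.ne_zero (by norm_num)
  have hne : ∀ i, 0 < i → i < 10 → 1 - w ^ i ≠ 0 := fun i h1 h2 h =>
    hw.pow_ne_one_of_pos_of_lt (by omega) h2 (sub_eq_zero.1 h).symm
  have hw5 : w ^ 5 = -1 := by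
    have h : (1 - w ^ 5) * (1 + w ^ 5) = 0 := by linear_combination -hw10
    rcases mul_eq_zero.1 h with h | h
    · exact absurd h (hne 5 (by norm_num) (by norm_num))
    · linear_combination h
  have hm1 : quadraticChar F (-1) = 1 := by
    rw [quadraticChar_one_iff_isSquare (by simp), FiniteField.isSquare_neg_one_iff]
    omega
  have hw1 : quadraticChar F w = 1 := by
    have h : quadraticChar F w ^ 5 = 1 := by rw [← map_pow, hw5, hm1]
    rcases quadraticChar_dichotomy hw0 with h' | h'
    · exact h'
    · rw [h'] at h; norm_num at h
  have hz1 : quadraticChar F (w ^ 2) = 1 := by rw [map_pow, hw1, one_pow]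
  have hrefl : ∀ i j, i + j = 10 → quadraticChar F (1 - w ^ i) = quadraticChar F (1 - w ^ j) := by
    intro i j h
    have : 1 - w ^ i = -1 * w ^ i * (1 - w ^ j) := by
      have : w ^ i * w ^ j = 1 := by rw [← pow_add, h, hw10]
      linear_combination -this
    rw [this]
    simp only [map_mul, map_pow, hm1, hw1, one_pow, one_mul]
  generalize ha : quadraticChar F (1 - w ^ 2) = a
  generalize hb : quadraticChar F (1 - w ^ 4) = b
  generalize hc : quadraticChar F (1 - w ^ 5) = c
  have da : a = 1 ∨ a = -1 := ha ▸ quadraticChar_dichotomy (hne 2 (by norm_num) (by norm_num))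
  have db : b = 1 ∨ b = -1 := hb ▸ quadraticChar_dichotomy (hne 4 (by norm_num) (by norm_num))
  have dc : c = 1 ∨ c = -1 := hc ▸ quadraticChar_dichotomy (hne 5 (by norm_num) (by norm_num))
  have h6 : quadraticChar F (1 - w ^ 6) = b := (hrefl 6 4 rfl).trans hb
  have h8 : quadraticChar F (1 - w ^ 8) = a := (hrefl 8 2 rfl).trans ha
  have h1 : quadraticChar F (1 - w) = a * b := by
    have : 1 - w ^ 2 = (1 - w) * (1 - w ^ 6) := by linear_combination (w - w ^ 2) * hw5
    rw [this, map_mul, h6] at ha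
    rw [← ha, mul_assoc]
    rcases db with rfl | rfl <;> simp
  have h7 : quadraticChar F (1 - w ^ 7) = a * b := by
    have : 1 - w ^ 4 = (1 - w ^ 2) * (1 - w ^ 7) := by linear_combination (w ^ 2 - w ^ 4) * hw5
    rw [this, map_mul, ha] at hb
    rw [← hb, ← mul_assoc]
    rcases da with rfl | rfl <;> simp
  have h9 : quadraticChar F (1 - w ^ 9) = a * b := by
    rw [hrefl 9 1 rfl, pow_one, h1]
  have h3 : quadraticChar F (1 - w ^ 3) = a * b := (hrefl 3 7 rfl).trans h7
  rw [design_iff 5 (by norm_num) (w ^ 2) hz hF, design_iff 10 (by norm_num) w hw hF,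
    sum_cs 10 w hw10 hw1 (tb10 a b c), sum_cs 5 (w ^ 2) hz.pow_eq_one hz1 (tb5 a b)]
  · exact cs_iff a b c da db dc
  · intro i
    fin_cases i <;> simp [tb5, ← pow_mul, ha, hb, h6, h8]
  · intro i
    fin_cases i <;> simp [tb10, ha, hb, hc, h1, h3, h6, h7, h8, h9]
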